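/- For an integer k ≥ 1, positive integers e_1,...,e_t, and a fixed integer r with 0 ≤ r ≤ k, the ordered Ramsey number satisfies OR(M_{e_1}^{k,r},...,M_{e_t}^{k,r}) = k·(1 + Σ_{i=1}^t (e_i − 1)). -/

import Mathlib

/-- An ordered hypergraph with vertex set `{1, …, n}` (with its natural order)
and edges given as finite sets of vertices. -/
structure OrderedHypergraph where
  n : ℕ
  edges : Finset (Finset ℕ)

/-- An ordered hypergraph `G` is contained in an ordered hypergraph `H` if there is an
injective, order-preserving map from the vertices of `G` to the vertices of `H` such that
edges of `G` map to edges of `H`. -/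
def OrderedHypergraph.Contains (H G : OrderedHypergraph) : Prop :=
  ∃ f : ℕ → ℕ, StrictMono f ∧ (∀ v ∈ Finset.Icc 1 G.n, f v ∈ Finset.Icc 1 H.n) ∧
    ∀ A ∈ G.edges, A.image f ∈ H.edges

/-- The complete `k`-uniform ordered hypergraph `K_N^k` on the vertex set `{1, …, N}`. -/
def completeHG (k N : ℕ) : OrderedHypergraph :=
  ⟨N, Finset.powersetCard k (Finset.Icc 1 N)⟩

/-- The `i`-colored subgraph of `K_N^k` under the coloring `c`. -/
def coloredSubgraph (k N : ℕ) {t : ℕ} (c : Finset ℕ → Fin t) (i : Fin t) : OrderedHypergraph :=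
  ⟨N, (Finset.powersetCard k (Finset.Icc 1 N)).filter fun A => c A = i⟩

/-- The ordered Ramsey number `OR(G 0, …, G (t-1))` of `k`-uniform ordered hypergraphs:
the minimum `N` such that every `t`-coloring of the edges of `K_N^k` contains, for some
color `i`, a copy of `G i` in the `i`-colored subgraph. -/
noncomputable def ORnum (k : ℕ) {t : ℕ} (G : Fin t → OrderedHypergraph) : ℕ :=
  sInf {N | ∀ c : Finset ℕ → Fin t, ∃ i, (coloredSubgraph k N c i).Contains (G i)}

/-- The `(k,ℓ)`-path `P_e^{k,ℓ}` with `e` edges: the ordered `k`-uniform hypergraph on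
vertex set `{1, …, e(k-ℓ)+ℓ}` with edges `A_r = {(r-1)(k-ℓ)+1, …, (r-1)(k-ℓ)+k}`. -/
def loosePath (k l e : ℕ) : OrderedHypergraph :=
  ⟨e * (k - l) + l,
    (Finset.range e).image fun r => Finset.Icc (r * (k - l) + 1) (r * (k - l) + k)⟩


/-- The `(k,r)`-nested matching `M_e^{k,r}` on `e` edges, written (order-isomorphically)
on the vertex set `{1, …, ke}`:  edge `i` (for `i = 0, …, e-1`, with `i = 0` the edge of
`M_1^{k,r}` and edge `i+1` obtained from edge `i` by taking the `k-r` greatest vertices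
below and the `r` least vertices above all previous vertices) consists of the block of
`k-r` vertices `{(e-1-i)(k-r)+1, …, (e-i)(k-r)}` together with the block of `r` vertices
`{e(k-r)+ir+1, …, e(k-r)+(i+1)r}`. -/
def nestedMatching (k r e : ℕ) : OrderedHypergraph :=
  ⟨k * e,
    (Finset.range e).image fun i =>
      Finset.Icc ((e - 1 - i) * (k - r) + 1) ((e - i) * (k - r)) ∪
        Finset.Icc (e * (k - r) + i * r + 1) (e * (k - r) + (i + 1) * r)⟩

/-! Any subset of `E` edges of a nested matching spans a copy of the nested matching with `E` edges.
Hence the pigeonhole principle, applied to the edges of the nested matching with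
`1 + ∑ i, (e i - 1)` edges, gives the upper bound.

For the lower bound, write `k = a + r` and peel the interval `{1, …, N}` layer by layer, one layer
being the `a` least and the `r` greatest remaining vertices. Assign `e i - 1` layers to each color
`i`, the outermost ones to color `0` and so on; fewer than `k` vertices remain in the middle. Give
an edge the color of the outermost layer it meets. A copy of the nested matching with `e i` edges
in color `i` would avoid all the layers of the previous colors, so that its innermost edge, which
has `e i - 1` edges around it, would avoid the layers of color `i` as well. -/

open Finset

section Blocks

/-- The `j`-th of the consecutive blocks of length `m` into which `ℕ` is cut. -/
def natBlock (m j : ℕ) : Finset ℕ := Ico (j * m) ((j + 1) * m)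

/-- The map that carries the `j`-th block of length `m` onto the `g j`-th one by translation.
For `m = 0` it is the identity, since then `x / m = 0` and `x % m = x`. -/
def blowUp (m : ℕ) (g : ℕ → ℕ) (x : ℕ) : ℕ := g (x / m) * m + x % m

variable {m e s j x : ℕ} {g : ℕ → ℕ}

lemma card_natBlock (m j : ℕ) : #(natBlock m j) = m := by
  rw [natBlock, Nat.card_Ico, ← Nat.sub_mul, Nat.add_sub_cancel_left, one_mul]

lemma natBlock_subset_range (hj : j < e) : natBlock m j ⊆ range (e * m) := fun _ hx ↦
  mem_range.2 <| (mem_Ico.1 hx).2.trans_le <| Nat.mul_le_mul_right m hj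

lemma exists_mem_natBlock (hx : x < e * m) : ∃ j < e, x ∈ natBlock m j := by
  have hm : 0 < m := pos_of_mul_pos_right (Nat.zero_lt_of_lt hx) e.zero_le
  refine ⟨x / m, (Nat.div_lt_iff_lt_mul hm).2 hx, mem_Ico.2 ⟨Nat.div_mul_le_self x m, ?_⟩⟩
  rw [Nat.succ_mul]
  exact Nat.lt_div_mul_add hm

lemma blowUp_mul_add (hs : s < m) : blowUp m g (j * m + s) = g j * m + s := by
  have hdiv : (j * m + s) / m = j := by
    rw [mul_comm, Nat.mul_add_div (Nat.zero_lt_of_lt hs), Nat.div_eq_of_lt hs, add_zero]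
  rw [blowUp, hdiv, Nat.mul_add_mod_of_lt hs]

lemma image_blowUp_natBlock (m : ℕ) (g : ℕ → ℕ) (j : ℕ) :
    (natBlock m j).image (blowUp m g) = natBlock m (g j) := by
  have natBlock_eq (i : ℕ) : natBlock m i = (range m).image (i * m + ·) := by
    rw [range_eq_Ico, image_add_left_Ico, add_zero, natBlock, Nat.succ_mul]
  rw [natBlock_eq, natBlock_eq, image_image]
  exact image_congr fun s hs ↦ blowUp_mul_add (mem_range.1 hs)

lemma strictMono_blowUp (hg : StrictMono g) : StrictMono (blowUp m g) := by
  intro x y hxy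
  rcases (Nat.div_le_div_right (c := m) hxy.le).lt_or_eq with hlt | heq
  · have hm : 0 < m := Nat.pos_of_ne_zero fun h ↦ by simp [h] at hlt
    calc
      blowUp m g x < (g (x / m) + 1) * m := by
        rw [blowUp, Nat.succ_mul]
        exact Nat.add_lt_add_left (Nat.mod_lt x hm) _
      _ ≤ g (y / m) * m := Nat.mul_le_mul_right m (hg hlt)
      _ ≤ blowUp m g y := Nat.le_add_right _ _
  · have hmod : x % m < y % m := by
      have hx := Nat.div_add_mod x m
      have hy := Nat.div_add_mod y m
      rw [heq] at hx
      omega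
    rw [blowUp, blowUp, heq]
    exact Nat.add_lt_add_left hmod _

lemma blowUp_lt {E S : ℕ} (hg : ∀ j < E, g j < S) (hx : x < E * m) : blowUp m g x < S * m := by
  obtain ⟨j, hj, hxj⟩ := exists_mem_natBlock hx
  have hmem : blowUp m g x ∈ natBlock m (g j) :=
    image_blowUp_natBlock m g j ▸ mem_image_of_mem _ hxj
  exact mem_range.1 (natBlock_subset_range (hg j hj) hmem)

end Blocks

section NestedEdge

/-- The `j`-th edge of the `(a + r, r)`-nested matching with `e` edges, counted from the inside.
The vertices to the left of the center are `e * a - u` and those to the right are `e * a + 1 + u`,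
where `u = 0, 1, …` is the distance from the center. -/
def nestedEdge (a r e j : ℕ) : Finset ℕ :=
  (natBlock a j).image (e * a - ·) ∪ (natBlock r j).image (e * a + 1 + ·)

variable {a r e j v : ℕ}

lemma edges_nestedMatching (a r e : ℕ) :
    (nestedMatching (a + r) r e).edges = (range e).image (nestedEdge a r e) := by
  refine image_congr fun j hj ↦ ?_
  have hj : j < e := mem_range.1 hj
  have hleft : (natBlock a j).image (e * a - ·) = Icc ((e - 1 - j) * a + 1) ((e - j) * a) := by
    rw [natBlock, Nat.Ico_image_const_sub_eq_Ico (Nat.mul_le_mul_right a hj.le),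
      Nat.sub_add_comm (Nat.mul_le_mul_right a hj), Nat.sub_add_comm (Nat.mul_le_mul_right a hj.le),
      ← Nat.sub_mul, ← Nat.sub_mul, Nat.sub_sub, add_comm 1 j]
    rfl
  have hright : (natBlock r j).image (e * a + 1 + ·) =
      Icc (e * a + j * r + 1) (e * a + (j + 1) * r) := by
    rw [natBlock, image_add_left_Ico, add_right_comm, add_right_comm _ 1 ((j + 1) * r)]
    rfl
  simp only [nestedEdge, hleft, hright, Nat.add_sub_cancel]

lemma card_nestedEdge (hj : j < e) : #(nestedEdge a r e j) = a + r := by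
  have hdisj : Disjoint ((natBlock a j).image (e * a - ·))
      ((natBlock r j).image (e * a + 1 + ·)) := by
    simp only [disjoint_left, mem_image]
    omega
  have hinj : Set.InjOn (e * a - ·) (natBlock a j : Set ℕ) := fun x hx y hy hxy ↦ by
    have hx := mem_range.1 (natBlock_subset_range hj hx)
    have hy := mem_range.1 (natBlock_subset_range hj hy)
    simp only at hxy
    omega
  rw [nestedEdge, card_union_of_disjoint hdisj, card_image_of_injOn hinj,
    card_image_of_injective _ (add_right_injective _), card_natBlock, card_natBlock]

lemma biUnion_nestedEdge (a r e : ℕ) :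
    (range e).biUnion (nestedEdge a r e) = Icc 1 ((a + r) * e) := by
  have hsplit : (a + r) * e = e * a + e * r := by ring
  ext v
  simp only [mem_biUnion, mem_range, mem_Icc, nestedEdge, mem_union, mem_image, hsplit]
  constructor
  · rintro ⟨j, hj, ⟨u, hu, rfl⟩ | ⟨u, hu, rfl⟩⟩ <;>
      have := mem_range.1 (natBlock_subset_range hj hu) <;> omega
  · intro hv
    rcases le_or_gt v (e * a) with hle | hgt
    · obtain ⟨j, hj, hu⟩ := exists_mem_natBlock (show e * a - v < e * a by omega)
      exact ⟨j, hj, .inl ⟨_, hu, by omega⟩⟩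
    · obtain ⟨j, hj, hu⟩ := exists_mem_natBlock (show v - (e * a + 1) < e * r by omega)
      exact ⟨j, hj, .inr ⟨_, hu, by omega⟩⟩

lemma nestedEdge_subset (hj : j < e) : nestedEdge a r e j ⊆ Icc 1 ((a + r) * e) :=
  biUnion_nestedEdge a r e ▸ subset_biUnion_of_mem (nestedEdge a r e) (mem_range.2 hj)

lemma exists_mem_nestedEdge (hv : v ∈ Icc 1 ((a + r) * e)) : ∃ j < e, v ∈ nestedEdge a r e j := by
  simpa only [← biUnion_nestedEdge, mem_biUnion, mem_range] using hv

lemma nestedEdge_zero_subset (a r e : ℕ) :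
    nestedEdge a r (e + 1) 0 ⊆ Icc (e * a + 1) (e * a + (a + r)) := by
  simp only [nestedEdge, natBlock, union_subset_iff, image_subset_iff, mem_Ico, mem_Icc,
    Nat.succ_mul]
  refine ⟨fun u hu ↦ ?_, fun u hu ↦ ?_⟩ <;> omega

end NestedEdge

section UpperBound

/-- The order embedding of the nested matching with `E` edges into the one with `S` edges that
carries the `j`-th edge to the `g j`-th one: on either side of the center it acts on the distance
from the center by `blowUp`. -/
def nestedEmbedding (a r E S : ℕ) (g : ℕ → ℕ) (v : ℕ) : ℕ :=
  if v ≤ E * a then S * a - blowUp a g (E * a - v) else S * a + 1 + blowUp r g (v - (E * a + 1))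

variable {a r E S j : ℕ} {g : ℕ → ℕ}

lemma strictMono_nestedEmbedding (hg : StrictMono g) (hgS : ∀ j < E, g j < S) :
    StrictMono (nestedEmbedding a r E S g) := by
  intro v w hvw
  unfold nestedEmbedding
  split_ifs with hv hw hw
  · have hlt : blowUp a g (E * a - w) < blowUp a g (E * a - v) :=
      strictMono_blowUp hg (by omega)
    have hbound : blowUp a g (E * a - w) < S * a := blowUp_lt hgS (by omega)
    omega
  · omega
  · omega
  · exact Nat.add_lt_add_left (strictMono_blowUp hg (by omega)) _

lemma image_nestedEmbedding_nestedEdge (hj : j < E) :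
    (nestedEdge a r E j).image (nestedEmbedding a r E S g) = nestedEdge a r S (g j) := by
  have hleft : Set.EqOn (nestedEmbedding a r E S g ∘ (E * a - ·)) ((S * a - ·) ∘ blowUp a g)
      (natBlock a j) := fun u hu ↦ by
    have hu := mem_range.1 (natBlock_subset_range hj hu)
    simp only [Function.comp_apply, nestedEmbedding, if_pos (Nat.sub_le _ _),
      Nat.sub_sub_self hu.le]
  have hright : nestedEmbedding a r E S g ∘ (E * a + 1 + ·) = (S * a + 1 + ·) ∘ blowUp r g := by
    funext u
    have hu : ¬ E * a + 1 + u ≤ E * a := by omega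
    simp only [Function.comp_apply, nestedEmbedding, if_neg hu, Nat.add_sub_cancel_left]
  rw [nestedEdge, nestedEdge, image_union, image_image, image_image, image_congr hleft, hright,
    ← image_image, ← image_image, image_blowUp_natBlock, image_blowUp_natBlock]

lemma nestedEmbedding_mem_Icc (hgS : ∀ j < E, g j < S) {v : ℕ} (hv : v ∈ Icc 1 ((a + r) * E)) :
    nestedEmbedding a r E S g v ∈ Icc 1 ((a + r) * S) := by
  obtain ⟨j, hj, hvj⟩ := exists_mem_nestedEdge hv
  have hmem := mem_image_of_mem (nestedEmbedding a r E S g) hvj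
  rw [image_nestedEmbedding_nestedEdge hj] at hmem
  exact nestedEdge_subset (hgS j hj) hmem

lemma exists_strictMono_forall_mem {s : Finset ℕ} {n : ℕ} (hn : n ≤ #s) :
    ∃ g : ℕ → ℕ, StrictMono g ∧ ∀ j < n, g j ∈ s := by
  obtain ⟨M, hM⟩ := exists_nat_subset_range s
  -- Enumerate the infinite set `s ∪ [M, ∞)`.
  let p (x : ℕ) : Prop := x ∈ s ∨ M ≤ x
  have hp : {x | p x}.Infinite := (Set.Ici_infinite M).mono fun _ ↦ .inr
  have hcount : n ≤ Nat.count p M := by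
    classical
    rw [Nat.count_eq_card_filter_range]
    exact hn.trans <| card_le_card fun x hx ↦ mem_filter.2 ⟨hM hx, .inl hx⟩
  refine ⟨Nat.nth p, Nat.nth_strictMono hp, fun j hj ↦ ?_⟩
  have hlt : Nat.nth p j < M := Nat.nth_lt_of_lt_count (hj.trans_le hcount)
  exact (Nat.nth_mem_of_infinite hp j).resolve_right hlt.not_ge

lemma exists_le_card_fiber {α ι : Type*} [Fintype ι] [DecidableEq ι] {e : ι → ℕ} (s : Finset α)
    (c : α → ι) (hs : ∑ i, (e i - 1) < #s) : ∃ i, e i ≤ #{j ∈ s | c j = i} := by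
  rw [card_eq_sum_card_fiberwise (f := c) (t := univ) fun _ _ ↦ mem_univ _] at hs
  obtain ⟨i, -, hi⟩ := exists_lt_of_sum_lt hs
  exact ⟨i, Nat.le_of_pred_lt hi⟩

theorem exists_contains_nestedMatching {t : ℕ} {e : Fin t → ℕ} (hS : ∑ i, (e i - 1) < S)
    (c : Finset ℕ → Fin t) :
    ∃ i, (coloredSubgraph (a + r) ((a + r) * S) c i).Contains (nestedMatching (a + r) r (e i)) := by
  obtain ⟨i, hi⟩ := exists_le_card_fiber (range S) (c ∘ nestedEdge a r S) (by rwa [card_range])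
  obtain ⟨g, hg, hgmem⟩ := exists_strictMono_forall_mem hi
  simp only [mem_filter, mem_range, Function.comp_apply] at hgmem
  have hgS : ∀ j < e i, g j < S := fun j hj ↦ (hgmem j hj).1
  refine ⟨i, nestedEmbedding a r (e i) S g, strictMono_nestedEmbedding hg hgS,
    fun v ↦ nestedEmbedding_mem_Icc hgS, ?_⟩
  simp only [edges_nestedMatching, forall_mem_image, mem_range]
  intro j hj
  rw [image_nestedEmbedding_nestedEdge hj]
  exact mem_filter.2 ⟨mem_powersetCard.2 ⟨nestedEdge_subset (hgS j hj), card_nestedEdge (hgS j hj)⟩,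
    (hgmem j hj).2⟩

end UpperBound

section LowerBound

/-- What remains of the vertex set `{1, …, N}` once `m` layers have been removed, each consisting of
the `a` least and the `r` greatest remaining vertices. If `r * m > N`, then nothing remains, in
accordance with the truncated subtraction. -/
def peeledIcc (a r N m : ℕ) : Finset ℕ := Icc (a * m + 1) (N - r * m)

variable {a r N m t : ℕ}

lemma peeledIcc_zero (a r N : ℕ) : peeledIcc a r N 0 = Icc 1 N := rfl

lemma card_peeledIcc_lt (hN : N < (a + r) * (1 + m)) : #(peeledIcc a r N m) < a + r := by
  have hpos : 0 < a + r := pos_of_mul_pos_left (Nat.zero_lt_of_lt hN) (Nat.zero_le _)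
  have hsplit : (a + r) * (1 + m) = a + r + a * m + r * m := by ring
  rw [peeledIcc, Nat.card_Icc]
  omega

lemma image_nestedEdge_zero_subset_peeledIcc {e : ℕ} {f : ℕ → ℕ} (hf : StrictMono f)
    (hsub : ∀ j < e + 1, (nestedEdge a r (e + 1) j).image f ⊆ peeledIcc a r N m) :
    (nestedEdge a r (e + 1) 0).image f ⊆ peeledIcc a r N (m + e) := by
  have hvertex : ∀ v ∈ Icc 1 ((a + r) * (e + 1)), f v ∈ peeledIcc a r N m := fun v hv ↦ by
    obtain ⟨j, hj, hvj⟩ := exists_mem_nestedEdge hv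
    exact hsub j hj (mem_image_of_mem f hvj)
  have hsplit : (a + r) * (e + 1) = e * a + (a + r) + e * r := by ring
  rw [image_subset_iff]
  intro v hv
  obtain ⟨hlo, hhi⟩ := mem_Icc.1 (nestedEdge_zero_subset a r e hv)
  -- The matching has `e * a` vertices to the left and `e * r` to the right of its innermost edge.
  have hleft := (mem_Icc.1 (hvertex (v - e * a) (mem_Icc.2 (by omega)))).1
  have hright := (mem_Icc.1 (hvertex (v + e * r) (mem_Icc.2 (by omega)))).2
  have hleft_gap : e * a + f (v - e * a) ≤ f v := by
    simpa only [Nat.add_sub_cancel' (show e * a ≤ v by omega)] using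
      hf.add_le_nat (e * a) (v - e * a)
  have hright_gap : e * r + f v ≤ f (v + e * r) := add_comm v (e * r) ▸ hf.add_le_nat (e * r) v
  rw [peeledIcc, mem_Icc, mul_add, mul_add, mul_comm a e, mul_comm r e]
  omega

lemma partialSum_last {M : Type*} [AddCommMonoid M] (d : Fin t → M) :
    Fin.partialSum d (Fin.last t) = ∑ i, d i := by
  rw [Fin.partialSum, Fin.val_last, List.take_of_length_le (by rw [List.length_ofFn]),
    List.sum_ofFn]

lemma exists_subset_peeledIcc_castSucc (d : Fin t → ℕ) (hN : N < (a + r) * (1 + ∑ i, d i))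
    {A : Finset ℕ} (hA : A ∈ powersetCard (a + r) (Icc 1 N)) :
    ∃ i : Fin t, A ⊆ peeledIcc a r N (Fin.partialSum d i.castSucc) ∧
      ¬ A ⊆ peeledIcc a r N (Fin.partialSum d i.succ) := by
  obtain ⟨hsub, hcard⟩ := mem_powersetCard.1 hA
  have hfirst : A ⊆ peeledIcc a r N (Fin.partialSum d 0) := by
    rwa [Fin.partialSum_zero, peeledIcc_zero]
  have hlast : ¬ A ⊆ peeledIcc a r N (Fin.partialSum d (Fin.last t)) := fun h ↦ by
    have hle := card_le_card h
    rw [hcard, partialSum_last] at hle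
    exact (card_peeledIcc_lt hN).not_ge hle
  by_contra! hstep
  exact hlast (Fin.induction hfirst hstep (Fin.last t))

theorem exists_coloring_not_contains_nestedMatching [NeZero t] {e : Fin t → ℕ}
    (he : ∀ i, 1 ≤ e i) (hN : N < (a + r) * (1 + ∑ i, (e i - 1))) :
    ∃ c : Finset ℕ → Fin t, ∀ i,
      ¬ (coloredSubgraph (a + r) N c i).Contains (nestedMatching (a + r) r (e i)) := by
  choose! c hinside houtside using
    fun A ↦ exists_subset_peeledIcc_castSucc (A := A) (fun i ↦ e i - 1) hN
  refine ⟨c, ?_⟩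
  rintro i ⟨f, hf, -, hedges⟩
  simp only [edges_nestedMatching, forall_mem_image, mem_range, coloredSubgraph, mem_filter]
    at hedges
  obtain ⟨E, hE⟩ : ∃ E, e i = E + 1 := Nat.exists_eq_add_of_le' (he i)
  rw [hE] at hedges
  have hsub : ∀ j < E + 1, (nestedEdge a r (E + 1) j).image f ⊆
      peeledIcc a r N (Fin.partialSum (fun i ↦ e i - 1) i.castSucc) := fun j hj ↦ by
    obtain ⟨hmem, hcolor⟩ := hedges hj
    exact hcolor ▸ hinside _ hmem
  obtain ⟨hmem, hcolor⟩ := hedges E.succ_pos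
  apply houtside _ hmem
  rw [hcolor, Fin.partialSum_succ, hE, Nat.add_sub_cancel]
  exact image_nestedEdge_zero_subset_peeledIcc hf hsub

end LowerBound

/-- For `k ≥ 1`, positive integers `e_1, …, e_t`, and a fixed
`0 ≤ r ≤ k`, `OR(M_{e_1}^{k,r}, …, M_{e_t}^{k,r}) = k(1 + Σ_i (e_i - 1))`. -/
theorem ordered_ramsey_nested_matchings (k r t : ℕ) (e : Fin t → ℕ)
    (hk : 1 ≤ k) (ht : 1 ≤ t) (he : ∀ i, 1 ≤ e i) (hr : r ≤ k) :
    ORnum k (fun i => nestedMatching k r (e i)) = k * (1 + ∑ i, (e i - 1)) := by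
  obtain ⟨a, rfl⟩ := Nat.exists_eq_add_of_le' hr
  have : NeZero t := ⟨Nat.one_le_iff_ne_zero.1 ht⟩
  refine IsLeast.csInf_eq
    ⟨exists_contains_nestedMatching (Nat.lt_one_add_iff.2 le_rfl), fun N hN ↦ ?_⟩
  by_contra! hlt
  obtain ⟨c, hc⟩ := exists_coloring_not_contains_nestedMatching he hlt
  obtain ⟨i, hi⟩ := hN c
  exact hc i hi
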